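/- arXiv:1012.0952 — 6 statements merged into one kernel-verified Lean document; each statement's English description precedes it below -/
import Mathlib

section
/- There exists N₀ ∈ ℕ such that for all n ≥ N₀, all real t ≥ (1 + 4·log log n / log n)·(2n / log n), and all even natural numbers d with 2 ≤ d ≤ n, it holds that C(n,d) · (C(d, d/2) · 2^{−d})^t ≤ 2^{−3t/4}. -/
/-!
Let `p d = C(d, d/2) / 2^d` and `L = log n`. Two bounds on `C(n, d) * p d ^ t` compete. Since
`C(n, d) ≤ n^d` and `p d ≤ 1/2`, it is at most `2^(d L - t)`; since `C(n, d) ≤ 2^n` and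
`p d ≤ (d + 1)^(-1/2)`, it is at most `2^(n - (t/2) log (d + 1))`. The first suffices when
`d ≤ n / L^3`, because then `d L` is negligible compared with `t ≥ 2n / L`. Otherwise
`log (d + 1) ≥ L - 3 log L`, and the factor `1 + 4 log L / L` in the threshold for `t` absorbs
both the loss `3 log L` and the target exponent `3t/4`.
-/

open Filter Real

section MiddleBinomial

lemma centralBinom_sq_mul_le (m : ℕ) : m.centralBinom ^ 2 * (2 * m + 1) ≤ 4 ^ (2 * m) := by
  induction m with
  | zero => simp
  | succ m ih =>
    refine Nat.le_of_mul_le_mul_left ?_ (pow_pos m.succ_pos 2)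
    calc (m + 1) ^ 2 * ((m + 1).centralBinom ^ 2 * (2 * (m + 1) + 1))
        = ((m + 1) * (m + 1).centralBinom) ^ 2 * (2 * m + 3) := by ring
      _ = 4 * ((2 * m + 1) * (2 * m + 3)) * (m.centralBinom ^ 2 * (2 * m + 1)) := by
        rw [Nat.succ_mul_centralBinom_succ]; ring
      _ ≤ 4 * (2 * m + 2) ^ 2 * 4 ^ (2 * m) := by
        gcongr
        linarith
      _ = (m + 1) ^ 2 * 4 ^ (2 * (m + 1)) := by ring

lemma centralBinom_succ_eq_two_mul_choose (m : ℕ) :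
    (m + 1).centralBinom = 2 * (2 * m + 1).choose m := by
  rw [Nat.centralBinom_eq_two_mul_choose, show 2 * (m + 1) = 2 * m + 1 + 1 by ring,
    Nat.choose_succ_succ, Nat.choose_symm_half, ← two_mul]

lemma choose_half_sq_mul_succ_le (d : ℕ) : d.choose (d / 2) ^ 2 * (d + 1) ≤ 4 ^ d := by
  obtain ⟨m, rfl | rfl⟩ := d.even_or_odd'
  · rw [Nat.mul_div_cancel_left m two_pos, ← Nat.centralBinom_eq_two_mul_choose]
    exact centralBinom_sq_mul_le m
  · rw [show (2 * m + 1) / 2 = m by lia]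
    refine Nat.le_of_mul_le_mul_left ?_ four_pos
    calc 4 * ((2 * m + 1).choose m ^ 2 * (2 * m + 1 + 1))
        = (m + 1).centralBinom ^ 2 * (2 * m + 2) := by
          rw [centralBinom_succ_eq_two_mul_choose]; ring
      _ ≤ (m + 1).centralBinom ^ 2 * (2 * (m + 1) + 1) :=
          Nat.mul_le_mul_left _ (by lia)
      _ ≤ 4 ^ (2 * (m + 1)) := centralBinom_sq_mul_le (m + 1)
      _ = 4 * 4 ^ (2 * m + 1) := by ring

/-- The probability that `d` fair coin tosses show exactly `⌊d / 2⌋` heads. The power of `2` is a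
real power, as in the inequality to be proved. -/
noncomputable def middleBinomialProb (d : ℕ) : ℝ :=
  (d.choose (d / 2) : ℝ) * (2 : ℝ) ^ (-(d : ℝ))

lemma middleBinomialProb_eq_div (d : ℕ) :
    middleBinomialProb d = (d.choose (d / 2) : ℝ) / 2 ^ d := by
  rw [middleBinomialProb, rpow_neg zero_le_two, rpow_natCast, div_eq_mul_inv]

lemma middleBinomialProb_nonneg (d : ℕ) : 0 ≤ middleBinomialProb d := by
  unfold middleBinomialProb
  positivity

lemma middleBinomialProb_le_half {d : ℕ} (hd : d ≠ 0) : middleBinomialProb d ≤ 1 / 2 := by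
  obtain ⟨k, rfl⟩ := Nat.exists_eq_succ_of_ne_zero hd
  have choose_le : ((k + 1).choose ((k + 1) / 2) : ℝ) ≤ 2 ^ k :=
    mod_cast Nat.choose_succ_le_two_pow k _
  rw [middleBinomialProb_eq_div, div_le_iff₀ (by positivity), pow_succ]
  linarith

lemma middleBinomialProb_le_rpow (d : ℕ) :
    middleBinomialProb d ≤ ((d : ℝ) + 1) ^ (-(1 / 2) : ℝ) := by
  have choose_le : (d.choose (d / 2) : ℝ) ^ 2 * (d + 1) ≤ (2 ^ d) ^ 2 := by
    rw [pow_right_comm, show (2 : ℝ) ^ 2 = 4 by norm_num]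
    exact_mod_cast choose_half_sq_mul_succ_le d
  rw [rpow_neg (by positivity), ← sqrt_eq_rpow, ← sqrt_inv]
  refine le_sqrt_of_sq_le ?_
  rwa [middleBinomialProb_eq_div, div_pow, inv_eq_one_div,
    div_le_div_iff₀ (by positivity) (by positivity), one_mul]

end MiddleBinomial

section ExponentBounds

variable {n d : ℕ} {t : ℝ}

lemma choose_mul_middleBinomialProb_rpow_le_two_rpow_mul_logb_sub
    (hn : n ≠ 0) (hd : d ≠ 0) (ht : 0 ≤ t) :
    (n.choose d : ℝ) * middleBinomialProb d ^ t ≤ 2 ^ (d * logb 2 n - t) := by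
  have choose_le : (n.choose d : ℝ) ≤ 2 ^ (d * logb 2 n) := by
    rw [mul_comm, rpow_mul zero_le_two,
      rpow_logb two_pos (by norm_num) (by positivity), rpow_natCast]
    exact_mod_cast Nat.choose_le_pow n d
  calc (n.choose d : ℝ) * middleBinomialProb d ^ t
      ≤ 2 ^ (d * logb 2 n) * (1 / 2) ^ t :=
        mul_le_mul choose_le
          (rpow_le_rpow (middleBinomialProb_nonneg d) (middleBinomialProb_le_half hd) ht)
          (rpow_nonneg (middleBinomialProb_nonneg d) t) (by positivity)
    _ = 2 ^ (d * logb 2 n - t) := by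
        rw [one_div, inv_rpow zero_le_two, ← rpow_neg zero_le_two, ← rpow_add two_pos,
          ← sub_eq_add_neg]

lemma choose_mul_middleBinomialProb_rpow_le_two_rpow_sub_mul_logb (ht : 0 ≤ t) :
    (n.choose d : ℝ) * middleBinomialProb d ^ t ≤ 2 ^ (n - t / 2 * logb 2 (d + 1)) := by
  have choose_le : (n.choose d : ℝ) ≤ 2 ^ (n : ℝ) := by
    rw [rpow_natCast]
    exact_mod_cast Nat.choose_le_two_pow n d
  have prob_le : middleBinomialProb d ≤ 2 ^ (logb 2 (d + 1) * -(1 / 2)) := by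
    rw [rpow_mul zero_le_two, rpow_logb two_pos (by norm_num) (by positivity)]
    exact middleBinomialProb_le_rpow d
  calc (n.choose d : ℝ) * middleBinomialProb d ^ t
      ≤ 2 ^ (n : ℝ) * (2 ^ (logb 2 (d + 1) * -(1 / 2))) ^ t :=
        mul_le_mul choose_le (rpow_le_rpow (middleBinomialProb_nonneg d) prob_le ht)
          (rpow_nonneg (middleBinomialProb_nonneg d) t) (by positivity)
    _ = 2 ^ (n - t / 2 * logb 2 (d + 1)) := by
        rw [← rpow_mul zero_le_two, ← rpow_add two_pos]
        ring_nf

end ExponentBounds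

section Threshold

variable {x y L l t : ℝ}

lemma two_mul_div_le_of_threshold_le (hx : 0 ≤ x) (hL : 0 ≤ L) (hl : 0 ≤ l)
    (ht : (1 + 4 * l / L) * (2 * x / L) ≤ t) : 2 * x / L ≤ t :=
  (le_mul_of_one_le_left (by positivity) (le_add_of_nonneg_right (by positivity))).trans ht

lemma mul_sub_le_of_mul_cube_le (hy : 0 ≤ y) (hL : 2 ≤ L) (hyx : y * L ^ 3 ≤ x)
    (ht : 2 * x / L ≤ t) : y * L - t ≤ -(3 * t / 4) := by
  have four_mul_le : 4 * (y * L) ≤ 2 * x / L := by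
    rw [le_div_iff₀ (by linarith)]
    calc 4 * (y * L) * L = 2 * (y * L ^ 2 * 2) := by ring
      _ ≤ 2 * (y * L ^ 2 * L) := by gcongr
      _ = 2 * (y * L ^ 3) := by ring
      _ ≤ 2 * x := by gcongr
  linarith

lemma logb_sub_mul_logb_le_of_le_mul_pow {b z : ℝ} {k : ℕ} (hb : 1 < b) (hx : 0 < x) (hz : 0 < z)
    (hxy : x ≤ y * z ^ k) : logb b x - k * logb b z ≤ logb b y := by
  have hy : 0 < y := pos_of_mul_pos_left (hx.trans_le hxy) (by positivity)
  rw [sub_le_iff_le_add, ← logb_pow, ← logb_mul hy.ne' (by positivity)]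
  exact logb_le_logb_of_le hb hx hxy

lemma sub_mul_le_of_threshold_le (hx : 0 ≤ x) (hl : 3 ≤ l) (hlL : 28 * l ≤ L)
    (hy : L - 3 * l ≤ y) (ht : (1 + 4 * l / L) * (2 * x / L) ≤ t) :
    x - t / 2 * y ≤ -(3 * t / 4) := by
  have hL : 0 < L := by linarith
  have ht_nonneg : 0 ≤ t := le_trans (by positivity) ht
  have sq_le : L ^ 2 ≤ (L + 4 * l) * (L - 3 * l - 3 / 2) := by
    have : 28 * l * l ≤ L * l := by gcongr
    have : 3 * L ≤ l * L := by gcongr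
    have : 3 * l ≤ l * l := by gcongr
    linarith
  have le_mul : x ≤ t * ((L - 3 * l - 3 / 2) / 2) := by
    calc x = x * L ^ 2 / L ^ 2 := by field_simp
      _ ≤ x * ((L + 4 * l) * (L - 3 * l - 3 / 2)) / L ^ 2 := by gcongr
      _ = (1 + 4 * l / L) * (2 * x / L) * ((L - 3 * l - 3 / 2) / 2) := by field_simp
      _ ≤ t * ((L - 3 * l - 3 / 2) / 2) := by
        gcongr
        linarith
  have : t / 2 * (L - 3 * l) ≤ t / 2 * y := by gcongr
  linarith

lemma eventually_three_le_logb_logb_and_mul_logb_logb_le :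
    ∀ᶠ n : ℕ in atTop, 3 ≤ logb 2 (logb 2 n) ∧ 28 * logb 2 (logb 2 n) ≤ logb 2 n := by
  have tendsto_logb : Tendsto (logb 2) atTop atTop := tendsto_logb_atTop one_lt_two
  have eventually_logb_le : ∀ᶠ y : ℝ in atTop, 28 * logb 2 y ≤ y := by
    filter_upwards [Asymptotics.isLittleO_iff_nat_mul_le'.1 (isLittleO_logb_id_atTop (b := 2)) 28,
      eventually_ge_atTop 0] with y hlog hy
    calc 28 * logb 2 y ≤ 28 * ‖logb 2 y‖ := by gcongr; exact le_norm_self _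
      _ ≤ ‖y‖ := mod_cast hlog
      _ = y := norm_of_nonneg hy
  exact (tendsto_logb.comp tendsto_natCast_atTop_atTop).eventually
    ((tendsto_logb.eventually_ge_atTop 3).and eventually_logb_le)

end Threshold

theorem stmt_0_general :
    ∀ᶠ n : ℕ in atTop, ∀ t : ℝ,
      (1 + 4 * logb 2 (logb 2 n) / logb 2 n) * (2 * n / logb 2 n) ≤ t →
        ∀ d : ℕ, d ≠ 0 →
          (n.choose d : ℝ) * ((d.choose (d / 2) : ℝ) * (2 : ℝ) ^ (-(d : ℝ))) ^ t ≤
            (2 : ℝ) ^ (-(3 * t / 4)) := by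
  filter_upwards [eventually_three_le_logb_logb_and_mul_logb_logb_le, eventually_ne_atTop 0]
    with n ⟨hl, hlL⟩ hn t ht d hd
  have hL : 2 ≤ logb 2 n := by linarith
  have ht' : 2 * n / logb 2 n ≤ t :=
    two_mul_div_le_of_threshold_le (by positivity) (by linarith) (by linarith) ht
  have ht_nonneg : 0 ≤ t := le_trans (by positivity) ht'
  rcases le_total (d * logb 2 n ^ 3) (n : ℝ) with d_small | d_large
  · exact (choose_mul_middleBinomialProb_rpow_le_two_rpow_mul_logb_sub hn hd ht_nonneg).trans
      (rpow_le_rpow_of_exponent_le one_le_two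
        (mul_sub_le_of_mul_cube_le d.cast_nonneg hL d_small ht'))
  · have n_le : (n : ℝ) ≤ (d + 1) * logb 2 n ^ 3 := d_large.trans (by gcongr; linarith)
    have logb_le : logb 2 n - 3 * logb 2 (logb 2 n) ≤ logb 2 (d + 1) := by
      simpa only [Nat.cast_ofNat] using
        logb_sub_mul_logb_le_of_le_mul_pow one_lt_two (by positivity) (by linarith) n_le
    exact (choose_mul_middleBinomialProb_rpow_le_two_rpow_sub_mul_logb ht_nonneg).trans
      (rpow_le_rpow_of_exponent_le one_le_two
        (sub_mul_le_of_threshold_le n.cast_nonneg hl hlL logb_le ht))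

/-- Proposition 1 of the paper: for sufficiently large `n`,
`t ≥ (1 + 4 log log n / log n) * (2n / log n)`, and even `d` with `2 ≤ d ≤ n`,
we have `C(n,d) * (C(d,d/2) * 2^(-d))^t ≤ 2^(-3t/4)`.  Here `log` is the
base-2 logarithm and all powers are real powers. -/
theorem stmt_0 :
    ∃ N₀ : ℕ, ∀ n : ℕ, n ≥ N₀ →
      ∀ t : ℝ,
        t ≥ (1 + 4 * Real.logb 2 (Real.logb 2 n) / Real.logb 2 n) *
              (2 * n / Real.logb 2 n) →
        ∀ d : ℕ, 2 ≤ d → d ≤ n → Even d →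
          (n.choose d : ℝ) * ((d.choose (d / 2) : ℝ) * (2 : ℝ) ^ (-(d : ℝ))) ^ t ≤
            (2 : ℝ) ^ (-(3 * t / 4)) := by
  obtain ⟨N₀, bound⟩ := eventually_atTop.1 stmt_0_general
  exact ⟨N₀, fun n hn t ht d hd _ _ => bound n hn t ht d (by lia)⟩
end

section
/- There exists N₀ ∈ ℕ such that for all n ≥ N₀, all real t ≥ 2n / log n, and all natural numbers d with 2 ≤ d and d < n / (log n)³, it holds that (e·n/d)^d · (π·d/2)^{−t/2} ≤ 2^{−3t/4}. -/
/-!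
Put `L = logb 2 n`. As `d ≥ 2`, the first factor is at most `2 ^ ((1 + L) * d)`, and as `π` exceeds
`2 ^ (3 / 2 + 1 / 8)`, the second is at most `2 ^ (-(3 * t / 4) - t / 16)`. The surplus `t / 16` is
at least `n / (8 * L)`, whereas `(1 + L) * d` is only of order `n / L ^ 2`, which is smaller once
`L ≥ 9`. The hypotheses on `d` give `2 * L ^ 3 < n = 2 ^ L`, and by Bernoulli's inequality
`2 ^ L ≤ 2 * L ^ 3` for `1 ≤ L ≤ 10`; hence `L > 10` as soon as `n ≥ 2`.
-/

theorem two_rpow_le_two_mul_cube {x : ℝ} (hx₁ : 1 ≤ x) (hx₁₀ : x ≤ 10) :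
    (2 : ℝ) ^ x ≤ 2 * x ^ 3 := by
  have bernoulli : (8 : ℝ) ^ ((x - 1) / 9) ≤ x :=
    calc (8 : ℝ) ^ ((x - 1) / 9) = (1 + 7) ^ ((x - 1) / 9) := by norm_num
      _ ≤ 1 + (x - 1) / 9 * 7 :=
        rpow_one_add_le_one_add_mul_self (by norm_num) (by linarith) (by linarith)
      _ ≤ x := by linarith
  calc (2 : ℝ) ^ x = 2 * 2 ^ (x - 1) := by rw [Real.rpow_sub_one two_ne_zero]; ring
    _ = 2 * ((8 : ℝ) ^ ((x - 1) / 9)) ^ 3 := by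
      rw [show (8 : ℝ) = 2 ^ (3 : ℝ) by norm_num, ← Real.rpow_mul zero_le_two,
        ← Real.rpow_mul_natCast zero_le_two]
      congr 2
      push_cast
      ring
    _ ≤ 2 * x ^ 3 := by gcongr

theorem ten_lt_logb_two_of_two_mul_cube_lt {n : ℝ} (hn : 2 ≤ n)
    (h : 2 * Real.logb 2 n ^ 3 < n) : 10 < Real.logb 2 n := by
  by_contra! hle
  have one_le_log : 1 ≤ Real.logb 2 n := by
    rwa [Real.le_logb_iff_rpow_le one_lt_two (by linarith), Real.rpow_one]
  have := two_rpow_le_two_mul_cube one_le_log hle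
  rw [Real.rpow_logb two_pos (by norm_num) (by linarith)] at this
  exact this.not_gt h

theorem two_rpow_thirteen_div_eight_le_pi : (2 : ℝ) ^ (13 / 8 : ℝ) ≤ Real.pi := by
  refine le_of_pow_le_pow_left₀ (n := 8) (by norm_num) Real.pi_pos.le ?_
  calc ((2 : ℝ) ^ (13 / 8 : ℝ)) ^ 8 = 2 ^ 13 := by
        rw [← Real.rpow_mul_natCast zero_le_two]; norm_num
    _ ≤ 3.14 ^ 8 := by norm_num
    _ ≤ Real.pi ^ 8 := by gcongr; exact Real.pi_gt_d2.le

theorem pi_mul_div_two_rpow_neg_le {d s : ℝ} (hd : 2 ≤ d) (hs : 0 ≤ s) :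
    (Real.pi * d / 2) ^ (-s) ≤ (2 : ℝ) ^ (-(13 / 8 * s)) := by
  have base_le : (2 : ℝ) ^ (13 / 8 : ℝ) ≤ Real.pi * d / 2 := by
    nlinarith [two_rpow_thirteen_div_eight_le_pi, Real.pi_pos]
  calc (Real.pi * d / 2) ^ (-s) ≤ ((2 : ℝ) ^ (13 / 8 : ℝ)) ^ (-s) :=
        Real.rpow_le_rpow_of_nonpos (by positivity) base_le (by linarith)
    _ = 2 ^ (-(13 / 8 * s)) := by rw [← Real.rpow_mul zero_le_two, mul_neg]

theorem exp_one_mul_div_rpow_le {n d : ℝ} (hn : 0 < n) (hd : 2 ≤ d) :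
    (Real.exp 1 * n / d) ^ d ≤ (2 : ℝ) ^ ((1 + Real.logb 2 n) * d) := by
  have base_le : Real.exp 1 * n / d ≤ 2 * n := by
    rw [div_le_iff₀ (by linarith)]
    nlinarith [Real.exp_one_lt_d9]
  calc (Real.exp 1 * n / d) ^ d ≤ (2 * n) ^ d := by gcongr
    _ = 2 ^ ((1 + Real.logb 2 n) * d) := by
      rw [Real.rpow_mul zero_le_two, Real.rpow_add two_pos, Real.rpow_one,
        Real.rpow_logb two_pos (by norm_num) hn]

theorem one_add_mul_le_div_of_le_div_cube {n d L : ℝ} (hn : 0 ≤ n) (hL : 9 ≤ L)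
    (hd : d ≤ n / L ^ 3) : (1 + L) * d ≤ n / (8 * L) := by
  have quadratic : 8 * (1 + L) ≤ L ^ 2 := by nlinarith
  calc (1 + L) * d ≤ (1 + L) * (n / L ^ 3) := by gcongr
    _ = 8 * (1 + L) * (n / (8 * L ^ 3)) := by field_simp
    _ ≤ L ^ 2 * (n / (8 * L ^ 3)) := by gcongr
    _ = n / (8 * L) := by field_simp

theorem stmt_1_general {n d t : ℝ} (hn : 2 ≤ n) (hd : 2 ≤ d)
    (hdn : d < n / Real.logb 2 n ^ 3) (ht : 2 * n / Real.logb 2 n ≤ t) :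
    (Real.exp 1 * n / d) ^ d * (Real.pi * d / 2) ^ (-(t / 2)) ≤ (2 : ℝ) ^ (-(3 * t / 4)) := by
  have log_pos : 0 < Real.logb 2 n := Real.logb_pos one_lt_two (by linarith)
  have two_mul_cube_lt : 2 * Real.logb 2 n ^ 3 < n :=
    (lt_div_iff₀ (by positivity)).mp (hd.trans_lt hdn)
  have log_gt : 10 < Real.logb 2 n := ten_lt_logb_two_of_two_mul_cube_lt hn two_mul_cube_lt
  have t_nonneg : 0 ≤ t := le_trans (by positivity) ht
  have exponent_le : (1 + Real.logb 2 n) * d ≤ t / 16 :=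
    calc (1 + Real.logb 2 n) * d ≤ n / (8 * Real.logb 2 n) :=
          one_add_mul_le_div_of_le_div_cube (by linarith) (by linarith) hdn.le
      _ = 2 * n / Real.logb 2 n / 16 := by field_simp; norm_num
      _ ≤ t / 16 := by gcongr
  calc (Real.exp 1 * n / d) ^ d * (Real.pi * d / 2) ^ (-(t / 2))
      ≤ 2 ^ ((1 + Real.logb 2 n) * d) * 2 ^ (-(13 / 8 * (t / 2))) := by
        gcongr
        · exact exp_one_mul_div_rpow_le (by linarith) hd
        · exact pi_mul_div_two_rpow_neg_le hd (by positivity)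
    _ ≤ 2 ^ (t / 16) * 2 ^ (-(13 / 8 * (t / 2))) := by gcongr; norm_num
    _ = 2 ^ (-(3 * t / 4)) := by rw [← Real.rpow_add two_pos]; ring_nf

/-- The small-`d` case in the proof of the binomial bound: for sufficiently
large `n`, `t ≥ 2n / log n` and `2 ≤ d < n / (log n)^3`, it holds that
`(e n / d)^d * (π d / 2)^(-t/2) ≤ 2^(-3t/4)`.  Here `log` is the base-2
logarithm and all powers are real powers. -/
theorem stmt_1 :
    ∃ N₀ : ℕ, ∀ n : ℕ, n ≥ N₀ →
      ∀ t : ℝ, t ≥ 2 * n / Real.logb 2 n →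
        ∀ d : ℕ, 2 ≤ d → (d : ℝ) < n / (Real.logb 2 n) ^ 3 →
          (Real.exp 1 * n / d) ^ (d : ℝ) * (Real.pi * d / 2) ^ (-(t / 2)) ≤
            (2 : ℝ) ^ (-(3 * t / 4)) :=
  ⟨2, fun _ hn _ ht _ hd hdn =>
    stmt_1_general (by exact_mod_cast hn) (by exact_mod_cast hd) hdn ht⟩
end

section
/- There exists N₀ ∈ ℕ such that for all n ≥ N₀, all real t ≥ (1 + 4·log log n / log n)·(2n / log n), and all natural numbers d with n / (log n)³ ≤ d ≤ n, it holds that 2^n · (π·d/2)^{−t/2} ≤ 2^{−3t/4}. -/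
/-!
Put `L = log x`, `M = log L` and `y = π d / 2`. Taking logarithms, the claim becomes
`x ≤ t/2 * (log y - 2c)`, and `log y ≥ L - k M` because `y ≥ d ≥ x / L ^ k`. At the smallest
admissible `t` it thus suffices that `L² ≤ (L + a M) (L - k M - 2c)`, whose right-hand side is
`L² + (a - k) L M + o(L M)`. The theorem is the case `a = 4`, `k = 3`, `c = 3/4`.
-/

open Asymptotics Filter Topology

section

variable {a b : ℝ}

theorem rpow_mul_rpow_le_rpow_iff {y u v w : ℝ} (hb : 1 < b) (hy : 0 < y) :
    b ^ u * y ^ v ≤ b ^ w ↔ u + v * Real.logb b y ≤ w := by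
  have hb₀ : 0 < b := zero_lt_one.trans hb
  have y_rpow : y ^ v = b ^ (v * Real.logb b y) := by
    rw [mul_comm, Real.rpow_mul hb₀.le, Real.rpow_logb hb₀ hb.ne' hy]
  rw [y_rpow, ← Real.rpow_add hb₀, Real.rpow_le_rpow_left_iff hb]

theorem eventually_sub_mul_sub_pos {ι : Type*} {l : Filter ι} {u v : ι → ℝ}
    (hu : Tendsto u l atTop) (huv : v =o[l] u) (k c : ℝ) :
    ∀ᶠ i in l, 0 < u i - k * v i - c := by
  have lower_order : (fun i ↦ k * v i + c) =o[l] u :=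
    (huv.const_mul_left k).add (isLittleO_const_left.2 (.inr (tendsto_norm_atTop_atTop.comp hu)))
  filter_upwards [lower_order.bound one_half_pos, hu.eventually_gt_atTop 0] with i hi hui
  rw [Real.norm_eq_abs, Real.norm_of_nonneg hui.le] at hi
  linarith [le_abs_self (k * v i + c)]

theorem eventually_sq_le_add_mul_mul_sub {ι : Type*} {l : Filter ι} {u v : ι → ℝ} {k : ℝ}
    (hu : Tendsto u l atTop) (hv : Tendsto v l atTop) (huv : v =o[l] u) (hka : k < a) (c : ℝ) :
    ∀ᶠ i in l, u i ^ 2 ≤ (u i + a * v i) * (u i - k * v i - c) := by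
  -- The function below is `((u + a v) (u - k v - c) - u²) / (u v)`.
  have tendsto_gap : Tendsto (fun i ↦ a - k - a * k * (v i / u i) - c / v i - a * c / u i) l
      (𝓝 (a - k)) := by
    simpa using ((huv.tendsto_div_nhds_zero.const_mul (a * k)).const_sub (a - k)).sub
      (hv.const_div_atTop c) |>.sub (hu.const_div_atTop (a * c))
  filter_upwards [tendsto_gap.eventually_const_lt (sub_pos.2 hka), hu.eventually_gt_atTop 0,
    hv.eventually_gt_atTop 0] with i gap_pos hui hvi
  calc
    u i ^ 2 ≤ u i ^ 2
        + u i * v i * (a - k - a * k * (v i / u i) - c / v i - a * c / u i) :=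
      le_add_of_nonneg_right (by positivity)
    _ = (u i + a * v i) * (u i - k * v i - c) := by
      field_simp
      ring

theorem le_mul_of_sq_le_add_mul {x L V s D E : ℝ} (hx : 0 < x) (hL : 0 < L) (hD : 0 < D)
    (hsq : L ^ 2 ≤ (L + V) * D) (hs : (1 + V / L) * (x / L) ≤ s) (hDE : D ≤ E) :
    x ≤ s * E := by
  have le_mul_at_min : x ≤ (1 + V / L) * (x / L) * D :=
    calc
      x = x / L ^ 2 * L ^ 2 := by field_simp
      _ ≤ x / L ^ 2 * ((L + V) * D) := by gcongr
      _ = (1 + V / L) * (x / L) * D := by field_simp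
  have s_nonneg : 0 ≤ s := (pos_of_mul_pos_left (hx.trans_le le_mul_at_min) hD.le).le.trans hs
  calc
    x ≤ (1 + V / L) * (x / L) * D := le_mul_at_min
    _ ≤ s * E := by gcongr

theorem logb_div_logb_rpow {x : ℝ} (hx : x ≠ 0) (hL : 0 < Real.logb b x) (k : ℝ) :
    Real.logb b (x / Real.logb b x ^ k) =
      Real.logb b x - k * Real.logb b (Real.logb b x) := by
  rw [Real.logb_div hx (Real.rpow_pos_of_pos hL k).ne', Real.logb_rpow_eq_mul_logb_of_pos hL]

theorem eventually_le_mul_logb_sub {k : ℝ} (hb : 1 < b) (hka : k < a) (c : ℝ) :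
    ∀ᶠ x : ℝ in atTop,
      ∀ s ≥ (1 + a * Real.logb b (Real.logb b x) / Real.logb b x) * (x / Real.logb b x),
        ∀ y ≥ x / Real.logb b x ^ k, x ≤ s * (Real.logb b y - c) := by
  have hlog : Tendsto (Real.logb b) atTop atTop := Real.tendsto_logb_atTop hb
  have hloglog := (Real.isLittleO_logb_id_atTop (b := b)).comp_tendsto hlog
  filter_upwards [eventually_gt_atTop 0, hlog.eventually_gt_atTop 0,
    eventually_sub_mul_sub_pos hlog hloglog k c,
    eventually_sq_le_add_mul_mul_sub hlog (hlog.comp hlog) hloglog hka c]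
    with x hx hL hpos hsq s hs y hy
  have logb_y_ge : Real.logb b x - k * Real.logb b (Real.logb b x) ≤ Real.logb b y := by
    rw [← logb_div_logb_rpow hx.ne' hL]
    exact Real.logb_le_logb_of_le hb (by positivity) hy
  exact le_mul_of_sq_le_add_mul hx hL hpos hsq hs (sub_le_sub_right logb_y_ge c)

theorem stmt_2_general {k : ℝ} (hb : 1 < b) (hka : k < a) (c : ℝ) :
    ∀ᶠ x : ℝ in atTop,
      ∀ t ≥ (1 + a * Real.logb b (Real.logb b x) / Real.logb b x) * (2 * x / Real.logb b x),
        ∀ d ≥ x / Real.logb b x ^ k,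
          b ^ x * (Real.pi * d / 2) ^ (-(t / 2)) ≤ b ^ (-(c * t)) := by
  filter_upwards [eventually_gt_atTop 0, (Real.tendsto_logb_atTop hb).eventually_gt_atTop 0,
    eventually_le_mul_logb_sub hb hka (2 * c)] with x hx hL hbound t ht d hd
  have hd₀ : 0 < d := lt_of_lt_of_le (by positivity) hd
  have d_le : d ≤ Real.pi * d / 2 := by nlinarith [Real.two_le_pi]
  have half_t_ge : t / 2 ≥
      (1 + a * Real.logb b (Real.logb b x) / Real.logb b x) * (x / Real.logb b x) := by
    linear_combination ht / 2
  rw [rpow_mul_rpow_le_rpow_iff hb (hd₀.trans_le d_le)]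
  linarith [hbound (t / 2) half_t_ge (Real.pi * d / 2) (hd.le.trans d_le)]

end

/-- The large-`d` case in the proof of the binomial bound: for sufficiently
large `n`, `t ≥ (1 + 4 log log n / log n) * (2n / log n)` and
`n / (log n)^3 ≤ d ≤ n`, it holds that `2^n * (π d / 2)^(-t/2) ≤ 2^(-3t/4)`.
Here `log` is the base-2 logarithm and all powers are real powers. -/
theorem stmt_2 :
    ∃ N₀ : ℕ, ∀ n : ℕ, n ≥ N₀ →
      ∀ t : ℝ,
        t ≥ (1 + 4 * Real.logb 2 (Real.logb 2 n) / Real.logb 2 n) *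
              (2 * n / Real.logb 2 n) →
        ∀ d : ℕ, (n : ℝ) / (Real.logb 2 n) ^ 3 ≤ d → d ≤ n →
          (2 : ℝ) ^ (n : ℝ) * (Real.pi * d / 2) ^ (-(t / 2)) ≤
            (2 : ℝ) ^ (-(3 * t / 4)) := by
  obtain ⟨N₀, hN₀⟩ := eventually_atTop.1 <| tendsto_natCast_atTop_atTop.eventually <|
    stmt_2_general one_lt_two (by norm_num : (3 : ℝ) < 4) (3 / 4)
  exact ⟨N₀, fun n hn t ht d hd _ ↦ by
    simpa [div_mul_eq_mul_div] using hN₀ n hn t ht d (by simpa using hd)⟩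
end

section
/- Let n ∈ ℕ and let y, z : Fin n → Bool be bitstrings with Hamming distance H(y,z) = d, where d is even. Then the number of bitstrings x : Fin n → Bool with H(x,y) = H(x,z) equals C(d, d/2) · 2^{n−d}. -/
/-!
Encode `x` by the set `S` of positions where it differs from `y`, and let `D` be the set of
positions where `y` differs from `z`. Over a two-letter alphabet this encoding is a bijection, and
`x` differs from `z` exactly on `S ∆ D`. Hence `x` is equidistant from `y` and `z` iff
`#(S ∆ D) = #S`, that is, iff `S` contains exactly half of `D`; outside `D` it is arbitrary.
-/

open scoped symmDiff

section FinsetCounting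

variable {α : Type*} [DecidableEq α]

theorem card_symmDiff_eq_card_left_iff (s t : Finset α) :
    (s ∆ t).card = s.card ↔ 2 * (s ∩ t).card = t.card := by
  have card_symmDiff : (s ∆ t).card = (s \ t).card + (t \ s).card :=
    Finset.card_union_of_disjoint disjoint_sdiff_sdiff
  have card_left := Finset.card_sdiff_add_card_inter s t
  have card_right := Finset.card_sdiff_add_card_inter t s
  rw [Finset.inter_comm t s] at card_right
  omega

variable [Fintype α]

theorem filter_inter_eq_eq_Icc {s t : Finset α} (hts : t ⊆ s) :
    (Finset.univ.filter fun u : Finset α => u ∩ s = t) = Finset.Icc t (t ∪ sᶜ) := by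
  ext u
  simp only [Finset.mem_filter_univ, Finset.mem_Icc]
  constructor
  · rintro rfl
    exact ⟨Finset.inter_subset_left, fun i hi => by simp [hi, em]⟩
  · rintro ⟨htu, hu⟩
    refine Finset.Subset.antisymm (fun i hi => ?_) (Finset.subset_inter htu hts)
    obtain ⟨hiu, his⟩ := Finset.mem_inter.1 hi
    exact (Finset.mem_union.1 (hu hiu)).resolve_right fun h => Finset.mem_compl.1 h his

theorem card_filter_inter_eq {s t : Finset α} (hts : t ⊆ s) :
    (Finset.univ.filter fun u : Finset α => u ∩ s = t).card =
      2 ^ (Fintype.card α - s.card) := by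
  have disjoint_compl : Disjoint t sᶜ := disjoint_compl_right.mono_left hts
  rw [filter_inter_eq_eq_Icc hts, Finset.card_Icc_finset Finset.subset_union_left,
    Finset.card_union_of_disjoint disjoint_compl, Nat.add_sub_cancel_left, Finset.card_compl]

theorem card_filter_card_inter_eq (s : Finset α) (k : ℕ) :
    (Finset.univ.filter fun u : Finset α => (u ∩ s).card = k).card =
      s.card.choose k * 2 ^ (Fintype.card α - s.card) := by
  have mapsTo : ∀ u ∈ Finset.univ.filter fun u : Finset α => (u ∩ s).card = k,
      u ∩ s ∈ s.powersetCard k := fun u hu =>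
    Finset.mem_powersetCard.2 ⟨Finset.inter_subset_right, (Finset.mem_filter_univ u).1 hu⟩
  have card_fiber : ∀ t ∈ s.powersetCard k,
      ((Finset.univ.filter fun u : Finset α => (u ∩ s).card = k).filter
        fun u => u ∩ s = t).card = 2 ^ (Fintype.card α - s.card) := by
    intro t ht
    obtain ⟨hts, rfl⟩ := Finset.mem_powersetCard.1 ht
    rw [← card_filter_inter_eq hts, Finset.filter_filter]
    congr 1
    exact Finset.filter_congr fun u _ => and_iff_right_of_imp (congrArg Finset.card)
  rw [Finset.card_eq_sum_card_fiberwise mapsTo, Finset.sum_congr rfl card_fiber,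
    Finset.sum_const, Finset.card_powersetCard, smul_eq_mul]

end FinsetCounting

section DiffSet

variable {ι : Type*} [Fintype ι]

/-- The set of positions at which two words differ; for a fixed word `y` it serves to encode a
bitstring `x` as a finite set. -/
def diffSet {β : ι → Type*} [∀ i, DecidableEq (β i)] (x y : ∀ i, β i) : Finset ι :=
  Finset.univ.filter fun i => x i ≠ y i

theorem card_diffSet {β : ι → Type*} [∀ i, DecidableEq (β i)] (x y : ∀ i, β i) :
    (diffSet x y).card = hammingDist x y :=
  rfl

theorem mem_diffSet {β : ι → Type*} [∀ i, DecidableEq (β i)] {x y : ∀ i, β i} {i : ι} :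
    i ∈ diffSet x y ↔ x i ≠ y i :=
  Finset.mem_filter_univ i

theorem bijective_diffSet_left (y : ι → Bool) :
    Function.Bijective fun x : ι → Bool => diffSet x y := by
  classical
  constructor
  · intro x x' h
    funext i
    have differ_iff : x i ≠ y i ↔ x' i ≠ y i := by
      rw [← mem_diffSet, ← mem_diffSet]
      exact Finset.ext_iff.1 h i
    revert differ_iff
    cases x i <;> cases x' i <;> cases y i <;> decide
  · intro s
    refine ⟨fun i => xor (y i) (decide (i ∈ s)), ?_⟩
    ext i
    simp only [mem_diffSet]
    by_cases hi : i ∈ s <;> simp [hi]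

variable [DecidableEq ι]

theorem diffSet_symmDiff_diffSet (x y z : ι → Bool) :
    diffSet x y ∆ diffSet y z = diffSet x z := by
  ext i
  simp only [Finset.mem_symmDiff, mem_diffSet]
  cases x i <;> cases y i <;> cases z i <;> decide

theorem hammingDist_eq_hammingDist_iff (x y z : ι → Bool) :
    hammingDist x y = hammingDist x z ↔
      2 * (diffSet x y ∩ diffSet y z).card = hammingDist y z := by
  rw [← card_diffSet y z, ← card_symmDiff_eq_card_left_iff, diffSet_symmDiff_diffSet,
    card_diffSet, card_diffSet, eq_comm]

end DiffSet

theorem stmt_5_general {ι : Type*} [Fintype ι] [DecidableEq ι] (y z : ι → Bool) (d : ℕ)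
    (hd : hammingDist y z = d) (hdeven : Even d) :
    (Finset.univ.filter fun x : ι → Bool => hammingDist x y = hammingDist x z).card =
      d.choose (d / 2) * 2 ^ (Fintype.card ι - d) := by
  have equidistant_iff (x : ι → Bool) : hammingDist x y = hammingDist x z ↔
      (diffSet x y ∩ diffSet y z).card = d / 2 := by
    rw [hammingDist_eq_hammingDist_iff, hd]
    have := Nat.two_mul_div_two_of_even hdeven
    omega
  calc
    _ = (Finset.univ.filter fun s : Finset ι => (s ∩ diffSet y z).card = d / 2).card :=
      Finset.card_bijective _ (bijective_diffSet_left y) fun x => by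
        rw [Finset.mem_filter_univ, Finset.mem_filter_univ, equidistant_iff]
    _ = d.choose (d / 2) * 2 ^ (Fintype.card ι - d) := by
      rw [card_filter_card_inter_eq, card_diffSet, hd]

/-- For bitstrings `y, z` at even Hamming distance `d`, the number of
bitstrings `x` with `H(x,y) = H(x,z)` equals `C(d, d/2) * 2^(n-d)`. -/
theorem stmt_5 (n : ℕ) (y z : Fin n → Bool) (d : ℕ) (hd : hammingDist y z = d)
    (hdeven : Even d) :
    (Finset.univ.filter fun x : Fin n → Bool =>
        hammingDist x y = hammingDist x z).card =
      d.choose (d / 2) * 2 ^ (n - d) := by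
  simpa only [Fintype.card_fin] using stmt_5_general y z d hd hdeven
end

section
/- Let n ∈ ℕ, let z : Fin n → Bool, let σ be a permutation of Fin n, and let f = LO_{z,σ}. If (x,y) is a critical pair for f, then either f(x) = n and f(y) = n, or f(x) > f(y). -/
/-- The LeadingOnes function `LO_{z,σ}(x) = max{m ∈ [0..n] : ∀ j < m, x(σ j) = z(σ j)}`. -/
def leadingOnes {n : ℕ} (z : Fin n → Bool) (σ : Equiv.Perm (Fin n))
    (x : Fin n → Bool) : ℕ :=
  ((Finset.range (n + 1)).filter fun m =>
    ∀ j : Fin n, (j : ℕ) < m → x (σ j) = z (σ j)).sup id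

/-- A pair `(x,y)` is critical for `f` if `f x ≥ f y` and the number of
positions where `x` and `y` agree equals `f y`. -/
def IsCriticalPair {n : ℕ} (f : (Fin n → Bool) → ℕ) (x y : Fin n → Bool) : Prop :=
  f x ≥ f y ∧ (Finset.univ.filter fun i => x i = y i).card = f y

/-!
If two bitstrings have the same LeadingOnes value `k < n`, then both agree with `z` at the first `k`
positions of the order `σ` and both differ from `z` at the next one. There being only two bit
values, they agree with each other at all `k + 1` of these positions, whereas a critical pair has
exactly `k` agreements.
-/

section

variable {n : ℕ} (z : Fin n → Bool) (σ : Equiv.Perm (Fin n)) (x : Fin n → Bool)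

theorem isGreatest_leadingOnes :
    IsGreatest {m | m ≤ n ∧ ∀ j : Fin n, (j : ℕ) < m → x (σ j) = z (σ j)}
      (leadingOnes z σ x) := by
  have mem_iff (m : ℕ) : (m ≤ n ∧ ∀ j : Fin n, (j : ℕ) < m → x (σ j) = z (σ j)) ↔
      m ∈ (Finset.range (n + 1)).filter fun m =>
        ∀ j : Fin n, (j : ℕ) < m → x (σ j) = z (σ j) := by
    rw [Finset.mem_filter, Finset.mem_range_succ_iff]
  constructor
  · obtain ⟨m, hm, hsup⟩ := Finset.exists_mem_eq_sup _ ⟨0, (mem_iff 0).1 (by simp)⟩ id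
    rw [leadingOnes, hsup]
    exact (mem_iff m).2 hm
  · exact fun m hm => Finset.le_sup (f := id) ((mem_iff m).1 hm)

theorem leadingOnes_le : leadingOnes z σ x ≤ n :=
  (isGreatest_leadingOnes z σ x).1.1

variable {z σ x} {y : Fin n → Bool}

theorem apply_eq_of_lt_leadingOnes {j : Fin n} (hj : (j : ℕ) < leadingOnes z σ x) :
    x (σ j) = z (σ j) :=
  (isGreatest_leadingOnes z σ x).1.2 j hj

theorem apply_ne_of_eq_leadingOnes {j : Fin n} (hj : (j : ℕ) = leadingOnes z σ x) :
    x (σ j) ≠ z (σ j) := by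
  intro hxz
  have hle : (j : ℕ) + 1 ≤ leadingOnes z σ x := by
    refine (isGreatest_leadingOnes z σ x).2 ⟨j.isLt, fun k hk => ?_⟩
    rcases Nat.lt_succ_iff_lt_or_eq.1 hk with hlt | heq
    · exact apply_eq_of_lt_leadingOnes (hlt.trans_eq hj)
    · rwa [Fin.ext heq]
  omega

theorem apply_eq_of_leadingOnes_eq (hxy : leadingOnes z σ x = leadingOnes z σ y)
    {j : Fin n} (hj : (j : ℕ) ≤ leadingOnes z σ y) : x (σ j) = y (σ j) := by
  rcases hj.lt_or_eq with hlt | heq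
  · exact (apply_eq_of_lt_leadingOnes (hlt.trans_eq hxy.symm)).trans
      (apply_eq_of_lt_leadingOnes hlt).symm
  · have hx : x (σ j) = !z (σ j) :=
      Bool.eq_not.2 (apply_ne_of_eq_leadingOnes (heq.trans hxy.symm))
    have hy : y (σ j) = !z (σ j) := Bool.eq_not.2 (apply_ne_of_eq_leadingOnes heq)
    rw [hx, hy]

theorem leadingOnes_lt_card_filter_eq (hxy : leadingOnes z σ x = leadingOnes z σ y)
    (hlt : leadingOnes z σ y < n) :
    leadingOnes z σ y < (Finset.univ.filter fun i => x i = y i).card := by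
  let k : Fin n := ⟨leadingOnes z σ y, hlt⟩
  have hsub : (Finset.Iic k).map σ.toEmbedding ⊆ Finset.univ.filter fun i => x i = y i := by
    intro i hi
    obtain ⟨j, hj, rfl⟩ := Finset.mem_map.1 hi
    exact Finset.mem_filter.2
      ⟨Finset.mem_univ _, apply_eq_of_leadingOnes_eq hxy (Fin.le_def.1 (Finset.mem_Iic.1 hj))⟩
  calc leadingOnes z σ y < ((Finset.Iic k).map σ.toEmbedding).card := by
        rw [Finset.card_map, Fin.card_Iic]
        exact Nat.lt_succ_self k
    _ ≤ (Finset.univ.filter fun i => x i = y i).card := Finset.card_le_card hsub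

end

/-- Lemma 9 of the paper: if `(x,y)` is a critical pair for `f = LO_{z,σ}`,
then either `f x = n = f y` or `f x > f y`. -/
theorem stmt_10 (n : ℕ) (z : Fin n → Bool) (σ : Equiv.Perm (Fin n))
    (x y : Fin n → Bool) (h : IsCriticalPair (leadingOnes z σ) x y) :
    (leadingOnes z σ x = n ∧ leadingOnes z σ y = n) ∨
      leadingOnes z σ x > leadingOnes z σ y := by
  obtain ⟨hge, hcard⟩ := h
  rcases hge.lt_or_eq with hlt | heq
  · exact Or.inr hlt
  · have hy : leadingOnes z σ y = n := by
      by_contra hne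
      have hlt : leadingOnes z σ y < n := (leadingOnes_le z σ y).lt_of_ne hne
      exact (leadingOnes_lt_card_filter_eq heq.symm hlt).ne' hcard
    exact Or.inl ⟨heq.symm.trans hy, hy⟩
end

section
/- Let n ∈ ℕ, let z : Fin n → Bool, let σ be a permutation of Fin n, and let f = LO_{z,σ}. Let y : Fin n → Bool with v := f(y) < n. Then for every position i ∈ Fin n, flipping bit i of y strictly increases the f-value, i.e., f(flip_i(y)) > f(y), if and only if i = σ(v). In other words, σ(v) is the unique critical bit-position of y. -/
section LeadingOnes

variable {n : ℕ} {z : Fin n → Bool} {σ : Equiv.Perm (Fin n)} {x : Fin n → Bool} {k : Fin n}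

theorem lt_leadingOnes_iff : (k : ℕ) < leadingOnes z σ x ↔ ∀ j ≤ k, x (σ j) = z (σ j) := by
  simp only [leadingOnes, Finset.lt_sup_iff, Finset.mem_filter, Finset.mem_range, id]
  constructor
  · rintro ⟨m, ⟨-, agree⟩, hkm⟩ j hjk
    exact agree j (lt_of_le_of_lt (Fin.le_def.mp hjk) hkm)
  · intro agree
    exact ⟨k + 1, ⟨by lia, fun j hj => agree j (Nat.le_of_lt_succ hj)⟩, k.val.lt_succ_self⟩

theorem apply_eq_of_lt_leadingOnes_s12 (hk : (k : ℕ) < leadingOnes z σ x) : x (σ k) = z (σ k) :=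
  lt_leadingOnes_iff.mp hk k le_rfl

theorem apply_ne_of_eq_leadingOnes_s12 (hk : (k : ℕ) = leadingOnes z σ x) : x (σ k) ≠ z (σ k) := by
  intro heq
  refine hk.not_lt (lt_leadingOnes_iff.mpr fun j hjk => ?_)
  rcases hjk.eq_or_lt with rfl | hlt
  · exact heq
  · exact apply_eq_of_lt_leadingOnes_s12 (hk ▸ hlt)

theorem leadingOnes_lt_update_iff (hk : (k : ℕ) = leadingOnes z σ x) (i : Fin n) (b : Bool) :
    leadingOnes z σ x < leadingOnes z σ (Function.update x i b) ↔ i = σ k ∧ b = z (σ k) := by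
  rw [← hk, lt_leadingOnes_iff]
  constructor
  · intro agree
    have agree_k : Function.update x i b (σ k) = z (σ k) := agree k le_rfl
    have hi : i = σ k := by
      by_contra hne
      rw [Function.update_of_ne (Ne.symm hne)] at agree_k
      exact apply_ne_of_eq_leadingOnes_s12 hk agree_k
    subst hi
    rw [Function.update_self] at agree_k
    exact ⟨rfl, agree_k⟩
  · rintro ⟨rfl, rfl⟩ j hjk
    rcases hjk.eq_or_lt with rfl | hlt
    · exact Function.update_self _ _ _
    · rw [Function.update_of_ne (σ.injective.ne hlt.ne)]
      exact apply_eq_of_lt_leadingOnes_s12 (hk ▸ hlt)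

end LeadingOnes

/-- `σ(v)` with `v = LO_{z,σ}(y) < n` is the unique critical bit-position of
`y`: flipping bit `i` of `y` strictly increases the LeadingOnes value iff
`i = σ(v)`. -/
theorem stmt_12 (n : ℕ) (z : Fin n → Bool) (σ : Equiv.Perm (Fin n))
    (y : Fin n → Bool) (v : ℕ) (hv : v = leadingOnes z σ y) (hvn : v < n)
    (i : Fin n) :
    leadingOnes z σ (Function.update y i (!(y i))) > leadingOnes z σ y ↔
      i = σ ⟨v, hvn⟩ := by
  have hne : y (σ ⟨v, hvn⟩) ≠ z (σ ⟨v, hvn⟩) := apply_ne_of_eq_leadingOnes_s12 hv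
  rw [gt_iff_lt, leadingOnes_lt_update_iff (k := ⟨v, hvn⟩) hv, and_iff_left_iff_imp]
  rintro rfl
  exact Bool.not_eq.mpr hne
end
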